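/- Let {M_i, π_{i,j} | i ≤ j < ω} be a directed system of models of set theory indexed by (ω,≤) such that M_{i+j} ⊆ M_i for all i,j < ω. Suppose there are formulas φ and ψ of the language of set theory such that for all i, j, k < ω with j ≤ k and all x, y ∈ M_i: x ∈ M_{i+j} iff M_i ⊨ φ(j, x), and (x ∈ M_{i+j} and π_{i+j,i+k}(x) = y) iff M_i ⊨ ψ(j, k, x, y). Then the direct limit M_∞ of the system is well-founded. -/

import Mathlib

/- ## A framework for transitive class/set models of fragments of ZFC,
     inside the universe `ZFSet` of ZF sets. -/

open FirstOrder FirstOrder.Language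

/-- The language of set theory: a single binary relation symbol `∈`. -/
inductive SetRelSym : ℕ → Type
  | mem : SetRelSym 2

/-- The first-order language of set theory. -/
def setL : FirstOrder.Language := ⟨fun _ => Empty, SetRelSym⟩

/-- Evaluation of a term of the language of set theory (terms are just variables). -/
def tval {n : ℕ} (v : Fin n → ZFSet) : setL.Term (Empty ⊕ Fin n) → ZFSet
  | .var (Sum.inl e) => e.elim
  | .var (Sum.inr i) => v i
  | .func f _ => f.elim

/-- Tarskian satisfaction of a formula of the language of set theory in a class `S` of
ZF-sets (equipped with true membership), under the assignment `v`. -/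
def ZSat (S : Set ZFSet) : ∀ {n : ℕ}, setL.BoundedFormula Empty n → (Fin n → ZFSet) → Prop
  | _, .falsum, _ => False
  | _, .equal t u, v => tval v t = tval v u
  | _, .rel R ts, v =>
      match R with
      | SetRelSym.mem => tval v (ts 0) ∈ tval v (ts 1)
  | _, .imp φ ψ, v => ZSat S φ v → ZSat S ψ v
  | _, .all φ, v => ∀ x ∈ S, ZSat S φ (Fin.snoc v x)

/-- Satisfaction of a sentence in a class of ZF-sets. -/
def SatS (S : Set ZFSet) (σ : setL.Sentence) : Prop := ZSat S σ finZeroElim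

/-- A class of ZF-sets is transitive. -/
def IsTransClass (S : Set ZFSet) : Prop := ∀ x ∈ S, ∀ y ∈ x, y ∈ S

/-- `r` is a well-ordering of the set `x`, from the point of view of the class `S`
(Kuratowski pairs code the relation; minimality is required for nonempty subsets of `x`
lying in `S`). -/
def WellOrders (S : Set ZFSet) (r x : ZFSet) : Prop :=
  (∀ a ∈ x, ZFSet.pair a a ∉ r) ∧
  (∀ a ∈ x, ∀ b ∈ x, ∀ c ∈ x, ZFSet.pair a b ∈ r → ZFSet.pair b c ∈ r → ZFSet.pair a c ∈ r) ∧
  (∀ a ∈ x, ∀ b ∈ x, a ≠ b → (ZFSet.pair a b ∈ r ∨ ZFSet.pair b a ∈ r)) ∧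
  (∀ y ∈ S, (∀ z ∈ y, z ∈ x) → y ≠ ∅ → ∃ m ∈ y, ∀ z ∈ y, ZFSet.pair z m ∉ r)

/-- `S` is a transitive model of ZFC⁻, i.e. of ZFC stated with the Replacement Scheme and
the Well-Ordering Theorem but without the Power Set Axiom.  (Extensionality and Foundation
are automatic for transitive classes of ZF-sets.) -/
def ModelsZFCminus (S : Set ZFSet) : Prop :=
  IsTransClass S ∧
  (∅ : ZFSet) ∈ S ∧
  (∀ x ∈ S, ∀ y ∈ S, ({x, y} : ZFSet) ∈ S) ∧
  (∀ x ∈ S, (ZFSet.sUnion x : ZFSet) ∈ S) ∧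
  ZFSet.omega ∈ S ∧
  (∀ (n : ℕ) (φ : setL.BoundedFormula Empty (n + 1)) (p : Fin n → ZFSet),
    (∀ i, p i ∈ S) → ∀ a ∈ S, ∃ b ∈ S, ∀ y, y ∈ b ↔ (y ∈ a ∧ ZSat S φ (Fin.snoc p y))) ∧
  (∀ (n : ℕ) (φ : setL.BoundedFormula Empty (n + 2)) (p : Fin n → ZFSet),
    (∀ i, p i ∈ S) → ∀ a ∈ S,
      (∀ x ∈ a, ∃! y, y ∈ S ∧ ZSat S φ (Fin.snoc (Fin.snoc p x) y)) →
      ∃ b ∈ S, ∀ y, y ∈ b ↔ ∃ x ∈ a, y ∈ S ∧ ZSat S φ (Fin.snoc (Fin.snoc p x) y)) ∧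
  (∀ x ∈ S, ∃ r ∈ S, WellOrders S r x)

/-- `S` is a transitive model of ZFC. -/
def ModelsZFC (S : Set ZFSet) : Prop :=
  ModelsZFCminus S ∧ ∀ x ∈ S, ∃ p ∈ S, ∀ y, y ∈ p ↔ (y ∈ S ∧ y ⊆ x)

/-- `f` is (the graph of) a surjection of `a` onto `b`. -/
def SurjFun (f a b : ZFSet) : Prop :=
  ZFSet.IsFunc a b f ∧ ∀ y ∈ b, ∃ x ∈ a, ZFSet.pair x y ∈ f

/-- `f` is (the graph of) an injection of `a` into `b`. -/
def InjFun (f a b : ZFSet) : Prop :=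
  ZFSet.IsFunc a b f ∧ ∀ x ∈ a, ∀ x' ∈ a, ∀ y, ZFSet.pair x y ∈ f → ZFSet.pair x' y ∈ f → x = x'

/-- `f` is (the graph of) a cofinal function from `β` into the ordinal `α`. -/
def CofinalFun (f β α : ZFSet) : Prop :=
  ZFSet.IsFunc β α f ∧ ∀ ξ ∈ α, ∃ η ∈ β, ∃ ζ, ZFSet.pair η ζ ∈ f ∧ (ξ ∈ ζ ∨ ξ = ζ)

/-- `μ = cof(α)` as computed inside the class `S` (for `S = Set.univ`, the true cofinality). -/
def IsCofOf (S : Set ZFSet) (α μ : ZFSet) : Prop :=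
  μ ∈ S ∧ μ.IsOrdinal ∧ (∃ f ∈ S, CofinalFun f μ α) ∧
  ∀ ν ∈ S, ZFSet.IsOrdinal ν → (∃ f ∈ S, CofinalFun f ν α) → μ ⊆ ν

/-- `κ` is a cardinal from the point of view of the class `S`
(for `S = Set.univ`, a true cardinal). -/
def IsCardIn (S : Set ZFSet) (κ : ZFSet) : Prop :=
  κ.IsOrdinal ∧ ∀ α ∈ κ, ∀ f ∈ S, ¬ SurjFun f α κ

/-- `μ` is an (infinite) regular cardinal from the point of view of the class `S`. -/
def IsRegularIn (S : Set ZFSet) (μ : ZFSet) : Prop :=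
  ZFSet.omega ⊆ μ ∧ IsCardIn S μ ∧ IsCofOf S μ μ

/-- `ν = μ⁺`, the cardinal successor of `μ`, as computed in the class `S`. -/
def CardSuccIn (S : Set ZFSet) (μ ν : ZFSet) : Prop :=
  ν ∈ S ∧ IsCardIn S ν ∧ μ ∈ ν ∧ ∀ ξ ∈ S, IsCardIn S ξ → μ ∈ ξ → ν ⊆ ξ

/-- `μ` is the largest cardinal of the model `S`. -/
def IsLargestCardIn (S : Set ZFSet) (μ : ZFSet) : Prop :=
  μ ∈ S ∧ IsCardIn S μ ∧ ∀ x ∈ S, IsCardIn S x → x ⊆ μ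

/-- `α = sup A`, for `A` a collection of ordinals: `α` is the least ordinal above all of them. -/
def IsSupOf (α : ZFSet) (A : Set ZFSet) : Prop :=
  α.IsOrdinal ∧ (∀ a ∈ A, a ⊆ α) ∧ ∀ β : ZFSet, β.IsOrdinal → (∀ a ∈ A, a ⊆ β) → α ⊆ β

/-- `π` is an elementary embedding (for the language of set theory) from the class `S`
into the class `T`. -/
def IsElem (S T : Set ZFSet) (π : ZFSet → ZFSet) : Prop :=
  (∀ x ∈ S, π x ∈ T) ∧
  ∀ (n : ℕ) (φ : setL.BoundedFormula Empty n) (v : Fin n → ZFSet),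
    (∀ i, v i ∈ S) → (ZSat S φ v ↔ ZSat T φ (fun i => π (v i)))

/-- A directed system of models of set theory: a directed partial order `ι`, transitive
(set) models `M i` of ZFC, and commuting elementary embeddings `pi i j : M i → M j`. -/
structure DirSystem (ι : Type) [PartialOrder ι] where
  M : ι → ZFSet
  pi : ι → ι → ZFSet → ZFSet
  directed : ∀ i j : ι, ∃ k, i ≤ k ∧ j ≤ k
  zfc : ∀ i, ModelsZFC (M i).toSet
  elem : ∀ i j, i ≤ j → IsElem (M i).toSet (M j).toSet (pi i j)
  map_id : ∀ i, ∀ x ∈ M i, pi i i x = x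
  map_comp : ∀ i j k, i ≤ j → j ≤ k → ∀ x ∈ M i, pi j k (pi i j x) = pi i k x

/-- `limit` (a transitive class) together with the maps `e i : M i → limit` is the
(transitivized) direct limit of the well-founded directed system `D`: the maps are
elementary, commute with the system maps, and every element of the limit is in the
range of some `e i`. -/
structure IsDirLimit {ι : Type} [PartialOrder ι] (D : DirSystem ι)
    (limit : Set ZFSet) (e : ι → ZFSet → ZFSet) : Prop where
  trans : IsTransClass limit
  elem : ∀ i, IsElem (D.M i).toSet limit (e i)
  compat : ∀ i j, i ≤ j → ∀ x ∈ D.M i, e j (D.pi i j x) = e i x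
  exhaust : ∀ y ∈ limit, ∃ i, ∃ x ∈ D.M i, e i x = y

/-- The `A`-indexed family of unary relations (sets) `R i` is uniformly definable over the
directed system `D`: some formula `φ(v, u)` with a parameter `a ∈ M i` (moved along by the
system maps) defines `R j` over `M j` for all `j ≥ i`. -/
def UnifDef1 {ι : Type} [PartialOrder ι] (D : DirSystem ι) (A : Set ι)
    (R : ι → Set ZFSet) : Prop :=
  ∃ i ∈ A, ∃ a, a ∈ D.M i ∧ ∃ φ : setL.BoundedFormula Empty 2,
    ∀ j, i ≤ j → j ∈ A ∧ (∀ x ∈ R j, x ∈ D.M j) ∧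
      ∀ x, x ∈ D.M j → (x ∈ R j ↔ ZSat (D.M j).toSet φ ![x, D.pi i j a])

/-- The family of binary relations `R i` is uniformly definable over the directed system `D`. -/
def UnifDef2 {ι : Type} [PartialOrder ι] (D : DirSystem ι)
    (R : ι → ZFSet → ZFSet → Prop) : Prop :=
  ∃ i, ∃ a, a ∈ D.M i ∧ ∃ φ : setL.BoundedFormula Empty 3,
    ∀ j, i ≤ j → (∀ x y, R j x y → x ∈ D.M j ∧ y ∈ D.M j) ∧
      ∀ x, x ∈ D.M j → ∀ y, y ∈ D.M j →
        (R j x y ↔ ZSat (D.M j).toSet φ ![x, y, D.pi i j a])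

/-- The von Neumann natural number `n` as a ZF-set. -/
def natZ : ℕ → ZFSet
  | 0 => ∅
  | n + 1 => insert (natZ n) (natZ n)

/-!
Let `E i` be a relation that is uniformly definable over the models `M i` and set-like in each of
them. By separation and replacement, a point of `M i` lies in the well-founded part of `E i` if and
only if `M i` has a partial Mostowski collapse of `E i` defined at that point. Well-foundedness
below a point is therefore expressed by a first-order formula, and the embeddings preserve it.

The formula `ψ` makes the membership of the direct limit above the index `i` such a relation over
`M i`, since `M i` contains all later models. Call `(i, x)` good if it lies in the well-founded part
of this membership. By ∈-induction every `(0, x)` with `x ∈ M 0` is good: if `(0, y)` is good for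
all `y ∈ x`, then by elementarity `(k, w)` is good for all `w ∈ π₀ₖ(x)`, and these are the
predecessors of `(0, x)`. By elementarity again, all pairs are good.
-/

universe u

/-- A class of ZF-sets as a first-order structure with true membership, which makes
Mathlib's semantics available for `ZSat`. -/
instance (S : Set ZFSet.{u}) : setL.Structure S where
  funMap f := f.elim
  RelMap R xs := match R, xs with
    | .mem, xs => (xs 0 : ZFSet) ∈ (xs 1 : ZFSet)

section Satisfaction

variable {S : Set ZFSet.{u}} {m n : ℕ}

theorem tval_val_comp (xs : Fin n → S) (t : setL.Term (Empty ⊕ Fin n)) :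
    tval (Subtype.val ∘ xs) t = t.realize (Sum.elim default xs) := by
  match t with
  | .var (Sum.inl e) => exact e.elim
  | .var (Sum.inr _) => rfl
  | .func f _ => exact f.elim

theorem ZSat_val_comp_iff_realize (φ : setL.BoundedFormula Empty n) (xs : Fin n → S) :
    ZSat S φ (Subtype.val ∘ xs) ↔ φ.Realize default xs := by
  induction φ with
  | falsum => rfl
  | equal t u => simp only [ZSat, tval_val_comp, BoundedFormula.Realize, Subtype.ext_iff]
  | rel R ts =>
    cases R
    simp only [ZSat, tval_val_comp]
    rfl
  | imp φ ψ ihφ ihψ => simp only [ZSat, BoundedFormula.Realize, ihφ, ihψ]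
  | all φ ih =>
    simp only [ZSat, BoundedFormula.Realize, ← ih, Fin.comp_snoc, Subtype.forall]

theorem exists_ZSat_iff_ZSat_comp (φ : setL.BoundedFormula Empty m) (f : Fin m → Fin n) :
    ∃ χ : setL.BoundedFormula Empty n, ∀ (S : Set ZFSet.{u}) (v : Fin n → ZFSet),
      (∀ a, v a ∈ S) → (ZSat S χ v ↔ ZSat S φ (v ∘ f)) := by
  let χ : setL.BoundedFormula Empty (n + 0) :=
    BoundedFormula.relabel (n := n) (Sum.elim Sum.inl (Sum.inr ∘ f)) φ.toFormula
  refine ⟨χ, fun S v hv => ?_⟩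
  let xs : Fin n → S := fun a => ⟨v a, hv a⟩
  calc ZSat S χ v ↔ χ.Realize default xs := ZSat_val_comp_iff_realize χ xs
    _ ↔ φ.toFormula.Realize (Sum.elim default (xs ∘ f)) := by
      rw [BoundedFormula.realize_relabel, Formula.Realize]
      refine iff_of_eq (congrArg₂ _ (funext ?_) (Subsingleton.elim _ _))
      rintro (e | a)
      exacts [e.elim, rfl]
    _ ↔ φ.Realize default (xs ∘ f) := BoundedFormula.realize_toFormula φ _
    _ ↔ ZSat S φ (v ∘ f) := (ZSat_val_comp_iff_realize φ (xs ∘ f)).symm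

end Satisfaction

/-- The predicates `P i` are defined over the classes `S i` by one and the same formula. -/
def UniformlyDefinable {ι : Type*} {n : ℕ} (S : ι → Set ZFSet.{u})
    (P : ι → (Fin n → ZFSet.{u}) → Prop) : Prop :=
  ∃ φ : setL.BoundedFormula Empty n,
    ∀ i v, (∀ a, v a ∈ S i) → (ZSat (S i) φ v ↔ P i v)

namespace UniformlyDefinable

section Logic

variable {ι : Type*} {m n : ℕ} {S : ι → Set ZFSet.{u}} {P Q : ι → (Fin n → ZFSet.{u}) → Prop}

theorem congr (hP : UniformlyDefinable S P)
    (hPQ : ∀ i v, (∀ a, v a ∈ S i) → (P i v ↔ Q i v)) : UniformlyDefinable S Q := by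
  obtain ⟨φ, hφ⟩ := hP
  exact ⟨φ, fun i v hv => (hφ i v hv).trans (hPQ i v hv)⟩

theorem map_iff (hP : UniformlyDefinable S P) {i j : ι} {π : ZFSet.{u} → ZFSet.{u}}
    (hπ : IsElem (S i) (S j) π) {v : Fin n → ZFSet.{u}} (hv : ∀ a, v a ∈ S i) :
    P i v ↔ P j fun a => π (v a) := by
  obtain ⟨φ, hφ⟩ := hP
  rw [← hφ i v hv, hπ.2 n φ v hv, hφ j _ fun a => hπ.1 _ (hv a)]

theorem comp {P : ι → (Fin m → ZFSet.{u}) → Prop} (hP : UniformlyDefinable S P)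
    (f : Fin m → Fin n) : UniformlyDefinable S fun i v => P i (v ∘ f) := by
  obtain ⟨φ, hφ⟩ := hP
  obtain ⟨χ, hχ⟩ := exists_ZSat_iff_ZSat_comp φ f
  exact ⟨χ, fun i v hv => (hχ (S i) v hv).trans (hφ i _ fun a => hv (f a))⟩

theorem comp₁ {P : ι → ZFSet.{u} → Prop}
    (hP : UniformlyDefinable S fun i (v : Fin 1 → ZFSet) => P i (v 0)) (a : Fin n) :
    UniformlyDefinable S fun i v => P i (v a) :=
  hP.comp ![a]

theorem comp₂ {P : ι → ZFSet.{u} → ZFSet.{u} → Prop}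
    (hP : UniformlyDefinable S fun i (v : Fin 2 → ZFSet) => P i (v 0) (v 1)) (a b : Fin n) :
    UniformlyDefinable S fun i v => P i (v a) (v b) :=
  hP.comp ![a, b]

theorem mem (a b : Fin n) : UniformlyDefinable S fun _ v => v a ∈ v b :=
  ⟨.rel SetRelSym.mem ![.var (Sum.inr a), .var (Sum.inr b)], fun _ _ _ => Iff.rfl⟩

protected theorem eq (a b : Fin n) : UniformlyDefinable S fun _ v => v a = v b :=
  ⟨.equal (.var (Sum.inr a)) (.var (Sum.inr b)), fun _ _ _ => Iff.rfl⟩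

theorem falsum : UniformlyDefinable S fun _ (_ : Fin n → ZFSet.{u}) => False :=
  ⟨.falsum, fun _ _ _ => Iff.rfl⟩

theorem imp (hP : UniformlyDefinable S P) (hQ : UniformlyDefinable S Q) :
    UniformlyDefinable S fun i v => P i v → Q i v := by
  obtain ⟨φ, hφ⟩ := hP
  obtain ⟨χ, hχ⟩ := hQ
  exact ⟨.imp φ χ, fun i v hv => by simp only [ZSat, hφ i v hv, hχ i v hv]⟩

protected theorem not (hP : UniformlyDefinable S P) :
    UniformlyDefinable S fun i v => ¬ P i v :=
  hP.imp falsum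

protected theorem and (hP : UniformlyDefinable S P) (hQ : UniformlyDefinable S Q) :
    UniformlyDefinable S fun i v => P i v ∧ Q i v :=
  (hP.imp hQ.not).not.congr fun _ _ _ => by tauto

protected theorem or (hP : UniformlyDefinable S P) (hQ : UniformlyDefinable S Q) :
    UniformlyDefinable S fun i v => P i v ∨ Q i v :=
  (hP.not.imp hQ).congr fun _ _ _ => by tauto

protected theorem iff (hP : UniformlyDefinable S P) (hQ : UniformlyDefinable S Q) :
    UniformlyDefinable S fun i v => P i v ↔ Q i v :=
  ((hP.imp hQ).and (hQ.imp hP)).congr fun _ _ _ => by tauto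

variable {R : ι → (Fin n → ZFSet.{u}) → ZFSet.{u} → Prop}

protected theorem all
    (hR : UniformlyDefinable S fun i (v : Fin (n + 1) → ZFSet) =>
      R i (fun a => v a.castSucc) (v (Fin.last n))) :
    UniformlyDefinable S fun i v => ∀ x ∈ S i, R i v x := by
  obtain ⟨φ, hφ⟩ := hR
  refine ⟨.all φ, fun i v hv => forall₂_congr fun x hx => ?_⟩
  have hvx : ∀ a, Fin.snoc (α := fun _ => ZFSet) v x a ∈ S i :=
    Fin.lastCases (by simpa using hx) (by simpa using hv)
  simpa using hφ i _ hvx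

protected theorem ex
    (hR : UniformlyDefinable S fun i (v : Fin (n + 1) → ZFSet) =>
      R i (fun a => v a.castSucc) (v (Fin.last n))) :
    UniformlyDefinable S fun i v => ∃ x ∈ S i, R i v x :=
  (UniformlyDefinable.all (R := fun i v x => ¬ R i v x) hR.not).not.congr fun _ _ _ => by
    push Not; rfl

end Logic

section BoundedQuantifiers

variable {ι : Type*} {n : ℕ} {S : ι → Set ZFSet.{u}}
  {R : ι → (Fin n → ZFSet.{u}) → ZFSet.{u} → Prop}

theorem ball (hS : ∀ i, IsTransClass (S i)) (a : Fin n)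
    (hR : UniformlyDefinable S fun i (v : Fin (n + 1) → ZFSet) =>
      R i (fun b => v b.castSucc) (v (Fin.last n))) :
    UniformlyDefinable S fun i v => ∀ x ∈ v a, R i v x :=
  (UniformlyDefinable.all (R := fun i v x => x ∈ v a → R i v x) ((mem _ _).imp hR)).congr
    fun i _ hv => ⟨fun h x hx => h x (hS i _ (hv a) x hx) hx, fun h x _ => h x⟩

theorem bex (hS : ∀ i, IsTransClass (S i)) (a : Fin n)
    (hR : UniformlyDefinable S fun i (v : Fin (n + 1) → ZFSet) =>
      R i (fun b => v b.castSucc) (v (Fin.last n))) :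
    UniformlyDefinable S fun i v => ∃ x ∈ v a, R i v x :=
  (UniformlyDefinable.ex (R := fun i v x => x ∈ v a ∧ R i v x) ((mem _ _).and hR)).congr
    fun i _ hv => ⟨fun ⟨x, _, h⟩ => ⟨x, h⟩, fun ⟨x, hx, h⟩ => ⟨x, hS i _ (hv a) x hx, hx, h⟩⟩

end BoundedQuantifiers

section SetOperations

variable {ι : Type*} {n : ℕ} {S : ι → Set ZFSet.{u}} (hS : ∀ i, IsTransClass (S i))
include hS

theorem subset (a b : Fin n) : UniformlyDefinable S fun _ v => v a ⊆ v b :=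
  (ball hS a (mem _ b.castSucc)).congr fun _ _ _ => ⟨fun h x => h x, fun h _ hx => h hx⟩

theorem eq_empty (a : Fin n) : UniformlyDefinable S fun _ v => v a = ∅ :=
  (ball hS a falsum).congr fun _ _ _ => (ZFSet.eq_empty _).symm

theorem eq_insert_self (a b : Fin n) :
    UniformlyDefinable S fun _ v => v a = insert (v b) (v b) :=
  ((mem b a).and ((subset hS b a).and
    (ball hS a (((UniformlyDefinable.eq _ b.castSucc).or (mem _ b.castSucc)))))).congr
    fun _ v _ => by
      constructor
      · rintro ⟨hba, hsub, h⟩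
        ext x
        rw [ZFSet.mem_insert_iff]
        exact ⟨h x, fun hx => hx.elim (fun hxb => hxb ▸ hba) fun hxb => hsub hxb⟩
      · rintro h
        simp +contextual [h, ZFSet.subset_def]

theorem eq_pairSet (a b c : Fin n) :
    UniformlyDefinable S fun _ v => v a = ({v b, v c} : ZFSet) :=
  ((mem b a).and ((mem c a).and (ball hS a
    ((UniformlyDefinable.eq _ b.castSucc).or (UniformlyDefinable.eq _ c.castSucc))))).congr
    fun _ v _ => by
      constructor
      · rintro ⟨hba, hca, h⟩
        ext x
        rw [ZFSet.mem_pair]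
        exact ⟨h x, fun hx => hx.elim (fun hxb => hxb ▸ hba) fun hxc => hxc ▸ hca⟩
      · rintro h
        simp [h]

theorem eq_pair (a b c : Fin n) :
    UniformlyDefinable S fun _ v => v a = ZFSet.pair (v b) (v c) :=
  (bex hS a (bex hS a.castSucc ((eq_pairSet hS (Fin.last n).castSucc _ _).and
    ((eq_pairSet hS (Fin.last (n + 1)) b.castSucc.castSucc c.castSucc.castSucc).and
      (eq_pairSet hS a.castSucc.castSucc (Fin.last n).castSucc (Fin.last (n + 1)))))) :
    UniformlyDefinable S fun _ v => ∃ s ∈ v a, ∃ t ∈ v a,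
      s = ({v b, v b} : ZFSet) ∧ t = ({v b, v c} : ZFSet) ∧ v a = ({s, t} : ZFSet)).congr
    fun _ v _ => by
      constructor
      · rintro ⟨s, -, t, -, rfl, rfl, h⟩
        rw [h, ZFSet.pair, ZFSet.pair_eq_singleton]
      · intro h
        refine ⟨_, ?_, _, ?_, rfl, rfl, ?_⟩ <;> simp [h, ZFSet.pair]

theorem pair_mem (a b c : Fin n) :
    UniformlyDefinable S fun _ v => ZFSet.pair (v a) (v b) ∈ v c :=
  (bex (R := fun _ v x => x = ZFSet.pair (v a) (v b)) hS c (eq_pair hS _ _ _)).congr fun _ _ _ =>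
    ⟨fun ⟨_, h, hx⟩ => hx ▸ h, fun h => ⟨_, h, rfl⟩⟩

end SetOperations

end UniformlyDefinable

section NaturalNumbers

theorem natZ_eq_toZFSet (n : ℕ) : natZ.{u} n = Ordinal.toZFSet n := by
  induction n with
  | zero => simp [natZ]
  | succ n ih => rw [natZ, ih, Nat.cast_succ, Ordinal.toZFSet_add_one]

theorem natZ_subset_natZ_iff {a b : ℕ} : natZ.{u} a ⊆ natZ b ↔ a ≤ b := by
  simp [natZ_eq_toZFSet, Ordinal.toZFSet_subset_toZFSet_iff]

theorem natZ_injective : Function.Injective natZ.{u} := fun a b h => by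
  simpa [natZ_eq_toZFSet, Ordinal.toZFSet_injective.eq_iff] using h

theorem natZ_mem_omega (n : ℕ) : natZ.{u} n ∈ ZFSet.omega := by
  induction n with
  | zero => exact ZFSet.omega_zero
  | succ n ih => exact ZFSet.omega_succ ih

theorem mk_ofNat_eq_natZ (n : ℕ) : ZFSet.mk (PSet.ofNat n) = natZ.{u} n := by
  induction n with
  | zero => rfl
  | succ n ih => rw [natZ, ← ih]; rfl

theorem mem_omega_iff {x : ZFSet.{u}} : x ∈ ZFSet.omega ↔ ∃ n, x = natZ n := by
  refine ⟨fun hx => ?_, fun ⟨n, hn⟩ => hn ▸ natZ_mem_omega n⟩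
  induction x using Quotient.inductionOn with
  | h x =>
    obtain ⟨⟨n⟩, hn⟩ := hx
    exact ⟨n, (ZFSet.sound hn).trans (mk_ofNat_eq_natZ n)⟩

end NaturalNumbers

theorem IsTransClass.mem_of_pair_mem {S : Set ZFSet.{u}} {x y : ZFSet.{u}} (hS : IsTransClass S)
    (h : ZFSet.pair x y ∈ S) : x ∈ S ∧ y ∈ S := by
  have hxy : ({x, y} : ZFSet) ∈ S := hS _ h _ (by simp [ZFSet.pair])
  exact ⟨hS _ hxy _ (by simp), hS _ hxy _ (by simp)⟩

namespace ModelsZFCminus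

variable {S : Set ZFSet.{u}} {x y : ZFSet.{u}}

theorem isTransClass (hS : ModelsZFCminus S) : IsTransClass S :=
  hS.1

theorem empty_mem (hS : ModelsZFCminus S) : ∅ ∈ S :=
  hS.2.1

theorem pairSet_mem (hS : ModelsZFCminus S) (hx : x ∈ S) (hy : y ∈ S) :
    ({x, y} : ZFSet) ∈ S :=
  hS.2.2.1 x hx y hy

theorem singleton_mem (hS : ModelsZFCminus S) (hx : x ∈ S) : ({x} : ZFSet) ∈ S :=
  ZFSet.pair_eq_singleton x ▸ hS.pairSet_mem hx hx

theorem pair_mem (hS : ModelsZFCminus S) (hx : x ∈ S) (hy : y ∈ S) : ZFSet.pair x y ∈ S :=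
  hS.pairSet_mem (hS.singleton_mem hx) (hS.pairSet_mem hx hy)

theorem sUnion_mem (hS : ModelsZFCminus S) (hx : x ∈ S) : ZFSet.sUnion x ∈ S :=
  hS.2.2.2.1 x hx

theorem insert_mem (hS : ModelsZFCminus S) (hx : x ∈ S) (hy : y ∈ S) : insert x y ∈ S := by
  have hinsert : insert x y = ZFSet.sUnion {{x}, y} := by ext; simp
  exact hinsert ▸ hS.sUnion_mem (hS.pairSet_mem (hS.singleton_mem hx) hy)

theorem omega_mem (hS : ModelsZFCminus S) : ZFSet.omega ∈ S :=
  hS.2.2.2.2.1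

theorem natZ_mem (hS : ModelsZFCminus S) (n : ℕ) : natZ n ∈ S :=
  hS.isTransClass _ hS.omega_mem _ (natZ_mem_omega n)

end ModelsZFCminus

namespace UniformlyDefinable

variable {ι : Type*} {n : ℕ} {S : ι → Set ZFSet.{u}} (hS : ∀ i, ModelsZFCminus (S i))
include hS

theorem mem_omega (a : Fin n) : UniformlyDefinable S fun _ v => v a ∈ ZFSet.omega := by
  have hT i := (hS i).isTransClass
  refine (UniformlyDefinable.all (R := fun _ v I => (∃ e ∈ I, e = ∅) →
    (∀ x ∈ I, ∃ y ∈ I, y = insert x x) → v a ∈ I) ?_).congr fun i v _ => ?_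
  · exact (bex hT _ (eq_empty hT _)).imp
      ((ball hT _ (bex hT _ (eq_insert_self hT _ _))).imp (mem _ _))
  · simp only [exists_eq_right, mem_omega_iff]
    constructor
    · exact fun h => mem_omega_iff.1 (h _ (hS i).omega_mem ZFSet.omega_zero
        fun _ => ZFSet.omega_succ)
    · rintro ⟨k, hk⟩ I - hzero hsucc
      rw [hk]
      clear hk
      induction k with
      | zero => exact hzero
      | succ k ih => exact hsucc _ ih

theorem exists_sep {Q : ι → ZFSet.{u} → ZFSet.{u} → Prop}
    (hQ : UniformlyDefinable S fun i (v : Fin 2 → ZFSet) => Q i (v 0) (v 1))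
    {i : ι} {p a : ZFSet.{u}} (hp : p ∈ S i) (ha : a ∈ S i) :
    ∃ b ∈ S i, ∀ y, y ∈ b ↔ y ∈ a ∧ Q i p y := by
  obtain ⟨φ, hφ⟩ := hQ
  obtain ⟨b, hb, h⟩ := (hS i).2.2.2.2.2.1 1 φ ![p] (by simpa using hp) a ha
  refine ⟨b, hb, fun y => (h y).trans (and_congr_right fun hy => ?_)⟩
  exact hφ i _ (Fin.forall_fin_two.2 ⟨hp, (hS i).isTransClass a ha y hy⟩)

theorem exists_image {F : ι → ZFSet.{u} → ZFSet.{u} → ZFSet.{u} → Prop}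
    (hF : UniformlyDefinable S fun i (v : Fin 3 → ZFSet) => F i (v 0) (v 1) (v 2))
    {i : ι} {p a : ZFSet.{u}} (hp : p ∈ S i) (ha : a ∈ S i)
    (hunique : ∀ x ∈ a, ∃! y, y ∈ S i ∧ F i p x y) :
    ∃ b ∈ S i, ∀ y, y ∈ b ↔ ∃ x ∈ a, y ∈ S i ∧ F i p x y := by
  obtain ⟨φ, hφ⟩ := hF
  have hφF {x y : ZFSet.{u}} (hx : x ∈ a) :
      y ∈ S i ∧ ZSat (S i) φ (Fin.snoc (Fin.snoc ![p] x) y) ↔ y ∈ S i ∧ F i p x y := by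
    have hxS := (hS i).isTransClass a ha x hx
    exact and_congr_right fun hy => hφ i (Fin.snoc (Fin.snoc ![p] x) y) <| by
      simpa [Fin.forall_fin_succ] using ⟨hp, hxS, hy⟩
  obtain ⟨b, hb, h⟩ := (hS i).2.2.2.2.2.2.1 1 φ ![p] (by simpa using hp) a ha
    fun x hx => by simpa only [hφF hx] using hunique x hx
  exact ⟨b, hb, fun y => (h y).trans <| exists_congr fun x => and_congr_right hφF⟩

/-- Replacement is applied to the map sending `x` to the set of all `y` with `Q i p x y`. -/
theorem exists_biUnion {Q : ι → ZFSet.{u} → ZFSet.{u} → ZFSet.{u} → Prop}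
    (hQ : UniformlyDefinable S fun i (v : Fin 3 → ZFSet) => Q i (v 0) (v 1) (v 2))
    {i : ι} {p a : ZFSet.{u}} (hp : p ∈ S i) (ha : a ∈ S i)
    (hslice : ∀ x ∈ a, ∃ Y ∈ S i, ∀ y, y ∈ Y ↔ Q i p x y) :
    ∃ Z ∈ S i, ∀ y, y ∈ Z ↔ ∃ x ∈ a, Q i p x y := by
  have hT := (hS i).isTransClass
  choose! Y hYS hYQ using hslice
  have hY_iff {x Y'} (hx : x ∈ a) : Y' ∈ S i ∧ (∀ y ∈ S i, y ∈ Y' ↔ Q i p x y) ↔ Y' = Y x := by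
    constructor
    · rintro ⟨hY', h⟩
      ext y
      exact ⟨fun hy => (hYQ x hx y).2 ((h y (hT _ hY' y hy)).1 hy), fun hy =>
        (h y (hT _ (hYS x hx) y hy)).2 ((hYQ x hx y).1 hy)⟩
    · rintro rfl
      exact ⟨hYS x hx, fun y _ => hYQ x hx y⟩
  obtain ⟨b, hb, hbY⟩ := exists_image hS
    (F := fun i p x Y' => ∀ y ∈ S i, y ∈ Y' ↔ Q i p x y)
    (UniformlyDefinable.all ((mem _ _).iff (hQ.comp ![0, 1, 3]))) hp ha
    fun x hx => ⟨Y x, (hY_iff hx).2 rfl, fun Y' hY' => (hY_iff hx).1 hY'⟩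
  refine ⟨ZFSet.sUnion b, (hS i).sUnion_mem hb, fun y => ?_⟩
  calc y ∈ ZFSet.sUnion b ↔ ∃ Y', (∃ x ∈ a, Y' = Y x) ∧ y ∈ Y' := by
        simp only [ZFSet.mem_sUnion, hbY]
        exact exists_congr fun Y' => and_congr_left fun _ => exists_congr fun x =>
          and_congr_right hY_iff
    _ ↔ ∃ x ∈ a, y ∈ Y x := by aesop
    _ ↔ ∃ x ∈ a, Q i p x y := exists_congr fun x => and_congr_right fun hx => hYQ x hx y

end UniformlyDefinable

theorem ModelsZFCminus.singleton_prod_mem {S : Set ZFSet.{u}} {x y : ZFSet.{u}}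
    (hS : ModelsZFCminus S) (hx : x ∈ S) (hy : y ∈ S) : ZFSet.prod {x} y ∈ S := by
  obtain ⟨b, hb, h⟩ := UniformlyDefinable.exists_image (S := fun _ : Unit => S) (fun _ => hS)
    (F := fun _ p w q => q = ZFSet.pair p w)
    (UniformlyDefinable.eq_pair (fun _ => hS.isTransClass) 2 0 1) (i := ()) hx hy
    fun w hw => ⟨_, ⟨hS.pair_mem hx (hS.isTransClass y hy w hw), rfl⟩, fun _ hq => hq.2⟩
  have hprod : ZFSet.prod {x} y = b := by
    ext q
    simp only [ZFSet.mem_prod, ZFSet.mem_singleton, exists_eq_left, h]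
    exact exists_congr fun w => and_congr_right fun hw =>
      ⟨fun hq => ⟨hq ▸ hS.pair_mem hx (hS.isTransClass y hy w hw), hq⟩, And.right⟩
  exact hprod ▸ hb

/-- `R`, a set of ordered pairs, is a partial Mostowski collapse of the relation `E`: its domain
is closed under `E`-predecessors, and it sends each point `p` of its domain to the set of the
values at the `E`-predecessors of `p`. That `R` is single-valued need not be required, see
`IsCollapse.unique`. -/
def IsCollapse (E : ZFSet.{u} → ZFSet.{u} → Prop) (R : ZFSet.{u}) : Prop :=
  ∀ p c, ZFSet.pair p c ∈ R →
    (∀ q, E q p → ∃ d ∈ c, ZFSet.pair q d ∈ R) ∧ ∀ d ∈ c, ∃ q, E q p ∧ ZFSet.pair q d ∈ R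

/-- `R` is a partial Mostowski collapse of `E` whose domain contains `p`. -/
def IsCollapseAt (E : ZFSet.{u} → ZFSet.{u} → Prop) (p R : ZFSet.{u}) : Prop :=
  IsCollapse E R ∧ ∃ c, ZFSet.pair p c ∈ R

/-- The class `S` has a partial Mostowski collapse of `E` defined at `p`: a way of saying inside
`S` that `p` lies in the well-founded part of `E`. -/
def CollapsibleIn (S : Set ZFSet.{u}) (E : ZFSet.{u} → ZFSet.{u} → Prop) (p : ZFSet.{u}) : Prop :=
  ∃ R ∈ S, IsCollapseAt E p R

section Collapse

variable {E : ZFSet.{u} → ZFSet.{u} → Prop} {p c R : ZFSet.{u}}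

theorem IsCollapse.unique {R' c' : ZFSet.{u}} (hR : IsCollapse E R) (hR' : IsCollapse E R')
    (hc : ZFSet.pair p c ∈ R) (hc' : ZFSet.pair p c' ∈ R') : c = c' := by
  induction c using ZFSet.inductionOn generalizing p c' with
  | _ c ih =>
    ext d
    constructor
    · intro hd
      obtain ⟨q, hqp, hqd⟩ := (hR p c hc).2 d hd
      obtain ⟨d', hd', hqd'⟩ := (hR' p c' hc').1 q hqp
      exact ih d hd hqd hqd' ▸ hd'
    · intro hd
      obtain ⟨q, hqp, hqd⟩ := (hR' p c' hc').2 d hd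
      obtain ⟨d', hd', hqd'⟩ := (hR p c hc).1 q hqp
      exact ih d' hd' hqd' hqd ▸ hd'

theorem IsCollapse.acc (hR : IsCollapse E R) (hc : ZFSet.pair p c ∈ R) : Acc E p := by
  induction c using ZFSet.inductionOn generalizing p with
  | _ c ih =>
    refine ⟨p, fun q hqp => ?_⟩
    obtain ⟨d, hd, hqd⟩ := (hR p c hc).1 q hqp
    exact ih d hd hqd

theorem IsCollapse.of_forall_exists
    (h : ∀ e ∈ R, ∃ R' ⊆ R, IsCollapse E R' ∧ e ∈ R') : IsCollapse E R := by
  intro p c hc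
  obtain ⟨R', hsub, hR', hc'⟩ := h _ hc
  refine ⟨fun q hqp => ?_, fun d hd => ?_⟩
  · obtain ⟨d, hd, hqd⟩ := (hR' p c hc').1 q hqp
    exact ⟨d, hd, hsub hqd⟩
  · obtain ⟨q, hqp, hqd⟩ := (hR' p c hc').2 d hd
    exact ⟨q, hqp, hsub hqd⟩

theorem IsCollapse.insert_pair (hR : IsCollapse E R)
    (hdom : ∀ q, E q p → ∃ d, ZFSet.pair q d ∈ R)
    (hc : ∀ d, d ∈ c ↔ ∃ q, E q p ∧ ZFSet.pair q d ∈ R) :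
    IsCollapse E (insert (ZFSet.pair p c) R) := by
  intro p' c' hc'
  simp only [ZFSet.mem_insert_iff] at hc' ⊢
  rcases hc' with hnew | hold
  · obtain ⟨rfl, rfl⟩ := ZFSet.pair_inj.1 hnew
    refine ⟨fun q hqp => ?_, fun d hd => ?_⟩
    · obtain ⟨d, hqd⟩ := hdom q hqp
      exact ⟨d, (hc d).2 ⟨q, hqp, hqd⟩, .inr hqd⟩
    · obtain ⟨q, hqp, hqd⟩ := (hc d).1 hd
      exact ⟨q, hqp, .inr hqd⟩
  · exact ⟨fun q hqp => ((hR p' c' hold).1 q hqp).imp fun _ => .imp_right .inr,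
      fun d hd => ((hR p' c' hold).2 d hd).imp fun _ => .imp_right .inr⟩

theorem IsCollapse.of_mem_iff_forall {C : Set ZFSet.{u}} (hC : ∀ R' ∈ C, IsCollapse E R')
    (hne : C.Nonempty) (hR : ∀ e, e ∈ R ↔ ∀ R' ∈ C, e ∈ R') : IsCollapse E R := by
  obtain ⟨R₀, hR₀⟩ := hne
  intro p c hc
  have hcR₀ := (hR _).1 hc R₀ hR₀
  have hforth : ∀ q, E q p → ∃ d ∈ c, ZFSet.pair q d ∈ R := by
    intro q hqp
    obtain ⟨d, hd, hqd⟩ := (hC R₀ hR₀ p c hcR₀).1 q hqp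
    refine ⟨d, hd, (hR _).2 fun R' hR' => ?_⟩
    obtain ⟨d', -, hqd'⟩ := (hC R' hR' p c ((hR _).1 hc R' hR')).1 q hqp
    rwa [(hC R₀ hR₀).unique (hC R' hR') hqd hqd']
  refine ⟨hforth, fun d hd => ?_⟩
  obtain ⟨q, hqp, hqd⟩ := (hC R₀ hR₀ p c hcR₀).2 d hd
  obtain ⟨d', -, hqd'⟩ := hforth q hqp
  have hdd' : d = d' := (hC R₀ hR₀).unique (hC R₀ hR₀) hqd ((hR _).1 hqd' R₀ hR₀)
  exact ⟨q, hqp, hdd' ▸ hqd'⟩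

theorem IsCollapseAt.of_mem_iff_forall {C : Set ZFSet.{u}} (hC : ∀ R' ∈ C, IsCollapseAt E p R')
    (hne : C.Nonempty) (hR : ∀ e, e ∈ R ↔ ∀ R' ∈ C, e ∈ R') : IsCollapseAt E p R := by
  refine ⟨.of_mem_iff_forall (fun R' hR' => (hC R' hR').1) hne hR, ?_⟩
  obtain ⟨R₀, hR₀⟩ := hne
  obtain ⟨hcol₀, c, hc⟩ := hC R₀ hR₀
  refine ⟨c, (hR _).2 fun R' hR' => ?_⟩
  obtain ⟨hcol', c', hc'⟩ := hC R' hR'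
  rwa [hcol₀.unique hcol' hc hc']

end Collapse

section WellFoundedPart

variable {ι : Type*} {S : ι → Set ZFSet.{u}} {E : ι → ZFSet.{u} → ZFSet.{u} → Prop}
  (hS : ∀ i, ModelsZFCminus (S i))
  (hE : UniformlyDefinable S fun i (v : Fin 2 → ZFSet) => E i (v 0) (v 1))
  (hpred : ∀ i, ∀ p ∈ S i, ∃ P ∈ S i, ∀ q, q ∈ P ↔ E i q p)
include hS hE hpred

open UniformlyDefinable

omit hE in
theorem mem_of_isPredecessor {i : ι} {p q : ZFSet.{u}} (hp : p ∈ S i) (hqp : E i q p) :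
    q ∈ S i := by
  obtain ⟨P, hP, hPq⟩ := hpred i p hp
  exact (hS i).isTransClass P hP q ((hPq q).2 hqp)

theorem uniformlyDefinable_isCollapseAt :
    UniformlyDefinable S fun i (v : Fin 2 → ZFSet) => IsCollapseAt (E i) (v 0) (v 1) := by
  have hT i := (hS i).isTransClass
  have hdef : UniformlyDefinable S fun i (v : Fin 2 → ZFSet) =>
      (∀ p ∈ S i, ∀ c ∈ S i, ZFSet.pair p c ∈ v 1 →
        (∀ q ∈ S i, E i q p → ∃ d ∈ c, ZFSet.pair q d ∈ v 1) ∧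
          ∀ d ∈ c, ∃ q ∈ S i, E i q p ∧ ZFSet.pair q d ∈ v 1) ∧
      ∃ c ∈ S i, ZFSet.pair (v 0) c ∈ v 1 :=
    (UniformlyDefinable.all <| .all <| (pair_mem hT _ _ _).imp <| .and
      (.all <| (hE.comp₂ _ _).imp <| bex hT _ <| pair_mem hT _ _ _)
      (ball hT _ <| .ex <| (hE.comp₂ _ _).and <| pair_mem hT _ _ _)).and
    (.ex <| pair_mem hT _ _ _)
  refine hdef.congr fun i v hv => and_congr ?_ ?_
  · constructor
    · intro h p c hpc
      obtain ⟨hp, hc⟩ := (hT i).mem_of_pair_mem (hT i _ (hv 1) _ hpc)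
      obtain ⟨hforth, hback⟩ := h p hp c hc hpc
      exact ⟨fun q hqp => hforth q (mem_of_isPredecessor hS hpred hp hqp) hqp,
        fun d hd => (hback d hd).imp fun _ => And.right⟩
    · intro h p hp c _ hpc
      obtain ⟨hforth, hback⟩ := h p c hpc
      exact ⟨fun q _ => hforth q, fun d hd => (hback d hd).imp fun q hq =>
        ⟨mem_of_isPredecessor hS hpred hp hq.1, hq⟩⟩
  · exact ⟨fun ⟨c, _, hc⟩ => ⟨c, hc⟩, fun ⟨c, hc⟩ =>
      ⟨c, ((hT i).mem_of_pair_mem (hT i _ (hv 1) _ hc)).2, hc⟩⟩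

theorem uniformlyDefinable_collapsibleIn :
    UniformlyDefinable S fun i (v : Fin 1 → ZFSet) => CollapsibleIn (S i) (E i) (v 0) :=
  .ex <| (uniformlyDefinable_isCollapseAt hS hE hpred).comp₂ _ _

theorem CollapsibleIn.exists_least {i : ι} {p : ZFSet.{u}} (hp : p ∈ S i)
    (h : CollapsibleIn (S i) (E i) p) :
    ∃ R₀ ∈ S i, IsCollapseAt (E i) p R₀ ∧
      ∀ e, e ∈ R₀ ↔ ∀ R ∈ S i, IsCollapseAt (E i) p R → e ∈ R := by
  obtain ⟨R, hR, hRp⟩ := h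
  obtain ⟨R₀, hR₀, he⟩ := exists_sep hS
    (Q := fun i p e => ∀ R ∈ S i, IsCollapseAt (E i) p R → e ∈ R)
    (.all <| ((uniformlyDefinable_isCollapseAt hS hE hpred).comp₂ _ _).imp <| mem _ _) hp hR
  have he' e : e ∈ R₀ ↔ ∀ R ∈ S i, IsCollapseAt (E i) p R → e ∈ R :=
    (he e).trans <| and_iff_right_of_imp fun h => h R hR hRp
  refine ⟨R₀, hR₀, ?_, he'⟩
  exact .of_mem_iff_forall (C := {R | R ∈ S i ∧ IsCollapseAt (E i) p R}) (fun _ hR' => hR'.2)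
    ⟨R, hR, hRp⟩ fun e => (he' e).trans <| by simp

theorem exists_isCollapse_of_forall {i : ι} {P : ZFSet.{u}} (hP : P ∈ S i)
    (h : ∀ q ∈ P, CollapsibleIn (S i) (E i) q) :
    ∃ U ∈ S i, IsCollapse (E i) U ∧ ∀ q ∈ P, ∃ d, ZFSet.pair q d ∈ U := by
  choose! R₀ hR₀S hR₀ hleast using fun q hq =>
    (h q hq).exists_least hS hE hpred ((hS i).isTransClass P hP q hq)
  obtain ⟨U, hU, hmem⟩ := exists_biUnion hS
    (Q := fun i _ q e => ∀ R ∈ S i, IsCollapseAt (E i) q R → e ∈ R)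
    (.all <| ((uniformlyDefinable_isCollapseAt hS hE hpred).comp₂ _ _).imp <| mem _ _)
    (hS i).empty_mem hP fun q hq => ⟨R₀ q, hR₀S q hq, hleast q hq⟩
  have hsub : ∀ q ∈ P, R₀ q ⊆ U := fun q hq e he => (hmem e).2 ⟨q, hq, (hleast q hq e).1 he⟩
  refine ⟨U, hU, .of_forall_exists fun e he => ?_, fun q hq => ?_⟩
  · obtain ⟨q, hq, heq⟩ := (hmem e).1 he
    exact ⟨R₀ q, hsub q hq, (hR₀ q hq).1, (hleast q hq e).2 heq⟩
  · exact (hR₀ q hq).2.imp fun _ hd => hsub q hq hd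

theorem collapsibleIn_of_forall {i : ι} {p : ZFSet.{u}} (hp : p ∈ S i)
    (h : ∀ q, E i q p → CollapsibleIn (S i) (E i) q) : CollapsibleIn (S i) (E i) p := by
  have hT i := (hS i).isTransClass
  obtain ⟨P, hP, hPE⟩ := hpred i p hp
  obtain ⟨U, hU, hcol, hdom⟩ :=
    exists_isCollapse_of_forall hS hE hpred hP fun q hq => h q ((hPE q).1 hq)
  have hmem {q d : ZFSet.{u}} (hqd : ZFSet.pair q d ∈ U) : d ∈ S i :=
    ((hT i).mem_of_pair_mem (hT i U hU _ hqd)).2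
  obtain ⟨c, hc, hcd⟩ := exists_image hS (F := fun _ U q d => ZFSet.pair q d ∈ U)
    (pair_mem hT _ _ _) hU hP fun q hq => by
      obtain ⟨d, hd⟩ := hdom q hq
      exact ⟨d, ⟨hmem hd, hd⟩, fun d' hd' => hcol.unique hcol hd'.2 hd⟩
  refine ⟨insert (ZFSet.pair p c) U, (hS i).insert_mem ((hS i).pair_mem hp hc) hU,
    hcol.insert_pair (fun q hqp => hdom q ((hPE q).2 hqp)) fun d => ?_, c, by simp⟩
  simp only [hcd, hPE]
  exact exists_congr fun q => and_congr_right fun _ => and_iff_right_of_imp hmem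

theorem collapsibleIn_iff_acc {i : ι} {p : ZFSet.{u}} (hp : p ∈ S i) :
    CollapsibleIn (S i) (E i) p ↔ Acc (E i) p := by
  refine ⟨fun ⟨R, _, hR, c, hc⟩ => hR.acc hc, fun h => ?_⟩
  induction h with
  | intro p _ ih =>
    exact collapsibleIn_of_forall hS hE hpred hp fun q hqp =>
      ih q hqp (mem_of_isPredecessor hS hpred hp hqp)

theorem uniformlyDefinable_acc :
    UniformlyDefinable S fun i (v : Fin 1 → ZFSet) => Acc (E i) (v 0) :=
  (uniformlyDefinable_collapsibleIn hS hE hpred).congr fun _ _ hv =>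
    collapsibleIn_iff_acc hS hE hpred (hv 0)

end WellFoundedPart

namespace DirSystem

section Limit

variable {ι : Type} [PartialOrder ι] (D : DirSystem ι)

/-- The membership relation of the direct limit, on the pairs `(i, x)` with `x ∈ M i` that
represent its elements. -/
def limitMem (p q : {p : ι × ZFSet // p.2 ∈ D.M p.1}) : Prop :=
  ∃ k, p.1.1 ≤ k ∧ q.1.1 ≤ k ∧ D.pi p.1.1 k p.1.2 ∈ D.pi q.1.1 k q.1.2

/-- Membership of the direct limit, restricted to those pairs `q = (k, w)` and `p = (i, z)` where
`i ≤ k`, so that `z` need only be moved to `M k` and not further. -/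
def forwardMem (q p : ι × ZFSet) : Prop :=
  p.1 ≤ q.1 ∧ p.2 ∈ D.M p.1 ∧ q.2 ∈ D.pi p.1 q.1 p.2

theorem modelsZFCminus (i : ι) : ModelsZFCminus (D.M i).toSet :=
  (D.zfc i).1

theorem isTransClass (i : ι) : IsTransClass (D.M i).toSet :=
  (D.modelsZFCminus i).isTransClass

variable {D}

theorem pi_mem {i j : ι} (hij : i ≤ j) {x : ZFSet} (hx : x ∈ D.M i) :
    D.pi i j x ∈ D.M j :=
  (D.elem i j hij).1 x hx

theorem pi_mem_pi {i j : ι} (hij : i ≤ j) {x y : ZFSet} (hx : x ∈ D.M i) (hy : y ∈ D.M i)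
    (hxy : x ∈ y) : D.pi i j x ∈ D.pi i j y :=
  ((UniformlyDefinable.mem (S := fun i => (D.M i).toSet) (0 : Fin 2) 1).map_iff
    (D.elem i j hij) (v := ![x, y]) (Fin.forall_fin_two.2 ⟨hx, hy⟩)).1 hxy

theorem limitMem.map_right {p q : {p : ι × ZFSet // p.2 ∈ D.M p.1}} (h : D.limitMem p q)
    {k : ι} (hk : q.1.1 ≤ k) :
    D.limitMem p ⟨(k, D.pi q.1.1 k q.1.2), pi_mem hk q.2⟩ := by
  obtain ⟨l, hpl, hql, hmem⟩ := h
  obtain ⟨m, hlm, hkm⟩ := D.directed l k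
  refine ⟨m, hpl.trans hlm, hkm, ?_⟩
  have hmem' := pi_mem_pi hlm (pi_mem hpl p.2) (pi_mem hql q.2) hmem
  rw [D.map_comp _ _ _ hpl hlm _ p.2, D.map_comp _ _ _ hql hlm _ q.2,
    ← D.map_comp _ _ _ hk hkm _ q.2] at hmem'
  exact hmem'

theorem acc_limitMem_of_acc_forwardMem {p : ι × ZFSet} (h : Acc D.forwardMem p)
    (hp : p.2 ∈ D.M p.1) : Acc D.limitMem ⟨p, hp⟩ := by
  induction h with
  | intro p _ ih =>
    refine ⟨_, fun q ⟨k, hqk, hpk, hmem⟩ => ?_⟩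
    have hacc := ih (k, D.pi q.1.1 k q.1.2) ⟨hpk, hp, hmem⟩ (pi_mem hqk q.2)
    exact ⟨_, fun r hrq => hacc.inv (hrq.map_right hqk)⟩

theorem acc_forwardMem [OrderBot ι]
    (hacc : UniformlyDefinable (fun i => (D.M i).toSet)
      fun i (v : Fin 1 → ZFSet) => Acc D.forwardMem (i, v 0))
    {i : ι} {x : ZFSet} (hx : x ∈ D.M i) : Acc D.forwardMem (i, x) := by
  have hbot : ∀ y ∈ D.M ⊥, Acc D.forwardMem (⊥, y) := by
    intro y
    induction y using ZFSet.inductionOn with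
    | _ y ih =>
      refine fun hy => ⟨_, fun ⟨k, w⟩ ⟨hk, _, hw⟩ => ?_⟩
      have hmem : UniformlyDefinable (fun i => (D.M i).toSet)
          fun i (v : Fin 1 → ZFSet) => ∀ z ∈ v 0, Acc D.forwardMem (i, z) :=
        .ball D.isTransClass _ (hacc.comp₁ (P := fun i z => Acc D.forwardMem (i, z)) _)
      exact (hmem.map_iff (D.elem ⊥ k hk) (v := ![y]) (Fin.forall_fin_one.2 hy)).1
        (fun z hz => ih z hz (D.isTransClass ⊥ y hy z hz)) w hw
  have hall : UniformlyDefinable (fun i => (D.M i).toSet)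
      fun i (_ : Fin 0 → ZFSet) => ∀ y ∈ (D.M i).toSet, Acc D.forwardMem (i, y) :=
    .all (hacc.comp₁ (P := fun i z => Acc D.forwardMem (i, z)) _)
  exact (hall.map_iff (D.elem ⊥ i bot_le) (v := ![]) (fun a => a.elim0)).1 hbot x hx

end Limit

section Coding

variable (D : DirSystem ℕ)

/-- The relation `forwardMem` above the index `i`, coded as a relation on sets: the pair
`(i + a, z)` becomes the set `ZFSet.pair (natZ a) z`. -/
def codedForwardMem (i : ℕ) (q p : ZFSet) : Prop :=
  ∃ a b z w, p = ZFSet.pair (natZ a) z ∧ q = ZFSet.pair (natZ b) w ∧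
    D.forwardMem (i + b, w) (i + a, z)

variable {D}

theorem codedForwardMem_pair_iff {i a b : ℕ} {z w : ZFSet} :
    D.codedForwardMem i (ZFSet.pair (natZ b) w) (ZFSet.pair (natZ a) z) ↔
      D.forwardMem (i + b, w) (i + a, z) := by
  simp only [codedForwardMem, ZFSet.pair_inj, natZ_injective.eq_iff]
  aesop

theorem acc_codedForwardMem_iff {i a : ℕ} {z : ZFSet} :
    Acc (D.codedForwardMem i) (ZFSet.pair (natZ a) z) ↔ Acc D.forwardMem (i + a, z) := by
  let tail : ℕ × ZFSet → ℕ × ZFSet → Prop :=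
    InvImage D.forwardMem fun p => (i + p.1, p.2)
  let shift : InitialSeg tail D.forwardMem :=
    { toFun p := (i + p.1, p.2)
      inj' p q h := by simpa [Prod.ext_iff] using h
      map_rel_iff' := Iff.rfl
      mem_range_of_rel' p q h :=
        ⟨(q.1 - i, q.2), Prod.ext (Nat.add_sub_of_le ((Nat.le_add_right i p.1).trans h.1)) rfl⟩ }
  let code : InitialSeg tail (D.codedForwardMem i) :=
    { toFun p := ZFSet.pair (natZ p.1) p.2
      inj' p q h := by simpa [Prod.ext_iff, ZFSet.pair_inj, natZ_injective.eq_iff] using h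
      map_rel_iff' := codedForwardMem_pair_iff
      mem_range_of_rel' p q := by
        rintro ⟨a, b, z, w, -, rfl, -⟩
        exact ⟨(b, w), rfl⟩ }
  exact (code.acc (a, z)).symm.trans (shift.acc (a, z))

variable (hsub : ∀ i j : ℕ, (D.M (i + j) : ZFSet) ⊆ D.M i)
include hsub

theorem forwardMem.mem_of_subset {i a b : ℕ} {z w : ZFSet}
    (h : D.forwardMem (i + b, w) (i + a, z)) :
    z ∈ D.M i ∧ D.pi (i + a) (i + b) z ∈ D.M i ∧ w ∈ D.M i := by
  obtain ⟨hab, hz, hw⟩ := h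
  have hpi := hsub i b (pi_mem hab hz)
  exact ⟨hsub i a hz, hpi, D.isTransClass i _ hpi w hw⟩

variable {ψ : setL.BoundedFormula Empty 4}
  (hψ : ∀ i j k : ℕ, j ≤ k → ∀ x ∈ D.M i, ∀ y ∈ D.M i,
    ((x ∈ D.M (i + j) ∧ D.pi (i + j) (i + k) x = y) ↔
      ZSat (D.M i).toSet ψ ![natZ j, natZ k, x, y]))
include hψ

omit hsub in
theorem uniformlyDefinable_pi :
    UniformlyDefinable (fun i => (D.M i).toSet) fun i (v : Fin 4 → ZFSet) =>
      ∃ a b, v 0 = natZ a ∧ v 1 = natZ b ∧ a ≤ b ∧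
        v 2 ∈ D.M (i + a) ∧ D.pi (i + a) (i + b) (v 2) = v 3 := by
  have hψ_def : UniformlyDefinable (fun i => (D.M i).toSet) fun i v => ZSat (D.M i).toSet ψ v :=
    ⟨ψ, fun _ _ _ => Iff.rfl⟩
  refine ((UniformlyDefinable.mem_omega D.modelsZFCminus 0).and
    ((UniformlyDefinable.mem_omega D.modelsZFCminus 1).and
      ((UniformlyDefinable.subset D.isTransClass 0 1).and hψ_def))).congr fun i v hv => ?_
  have hv_eq : v = ![v 0, v 1, v 2, v 3] := by ext a; fin_cases a <;> rfl
  simp only [mem_omega_iff]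
  constructor
  · rintro ⟨⟨a, ha⟩, ⟨b, hb⟩, hab, hsat⟩
    rw [ha, hb, natZ_subset_natZ_iff] at hab
    rw [hv_eq, ha, hb] at hsat
    exact ⟨a, b, ha, hb, hab, (hψ i a b hab _ (hv 2) _ (hv 3)).2 hsat⟩
  · rintro ⟨a, b, ha, hb, hab, hpi⟩
    refine ⟨⟨a, ha⟩, ⟨b, hb⟩, by rwa [ha, hb, natZ_subset_natZ_iff], ?_⟩
    rw [hv_eq, ha, hb]
    exact (hψ i a b hab _ (hv 2) _ (hv 3)).1 hpi

theorem uniformlyDefinable_codedForwardMem :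
    UniformlyDefinable (fun i => (D.M i).toSet) fun i (v : Fin 2 → ZFSet) =>
      D.codedForwardMem i (v 0) (v 1) := by
  have hT := D.isTransClass
  have hpi := uniformlyDefinable_pi hψ
  have hdef : UniformlyDefinable (fun i => (D.M i).toSet) fun i (v : Fin 2 → ZFSet) =>
      ∃ k ∈ (D.M i).toSet, ∃ l ∈ (D.M i).toSet, ∃ z ∈ (D.M i).toSet, ∃ w ∈ (D.M i).toSet,
        ∃ u ∈ (D.M i).toSet, v 1 = ZFSet.pair k z ∧ v 0 = ZFSet.pair l w ∧
          (∃ a b, k = natZ a ∧ l = natZ b ∧ a ≤ b ∧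
            z ∈ D.M (i + a) ∧ D.pi (i + a) (i + b) z = u) ∧ w ∈ u :=
    .ex <| .ex <| .ex <| .ex <| .ex <| (UniformlyDefinable.eq_pair hT 1 2 4).and <|
      (UniformlyDefinable.eq_pair hT 0 3 5).and <|
        (hpi.comp ![2, 3, 4, 6]).and (.mem 5 6)
  refine hdef.congr fun i v _ => ⟨?_, ?_⟩
  · rintro ⟨-, -, -, -, z, -, w, -, -, -, hp, hq, ⟨a, b, rfl, rfl, hab, hz, rfl⟩, hw⟩
    exact ⟨a, b, z, w, hp, hq, Nat.add_le_add_left hab i, hz, hw⟩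
  · rintro ⟨a, b, z, w, hp, hq, h⟩
    obtain ⟨hzS, huS, hwS⟩ := h.mem_of_subset hsub
    exact ⟨_, (D.modelsZFCminus i).natZ_mem a, _, (D.modelsZFCminus i).natZ_mem b, z, hzS, w, hwS,
      _, huS, hp, hq, ⟨a, b, rfl, rfl, Nat.add_le_add_iff_left.1 h.1, h.2.1, rfl⟩, h.2.2⟩

omit hψ in
theorem exists_predecessors_of_index (i b : ℕ) (p : ZFSet) :
    ∃ P ∈ D.M i, ∀ q, q ∈ P ↔
      D.codedForwardMem i q p ∧ ∃ w ∈ (D.M i).toSet, q = ZFSet.pair (natZ b) w := by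
  have hS := D.modelsZFCminus i
  by_cases h : ∃ a z, p = ZFSet.pair (natZ a) z ∧ a ≤ b ∧ z ∈ D.M (i + a)
  · obtain ⟨a, z, rfl, hab, hz⟩ := h
    have hab' := Nat.add_le_add_left hab i
    have hu : D.pi (i + a) (i + b) z ∈ D.M i := hsub i b (pi_mem hab' hz)
    refine ⟨_, hS.singleton_prod_mem (hS.natZ_mem b) hu, fun q => ?_⟩
    simp only [ZFSet.mem_prod, ZFSet.mem_singleton, exists_eq_left]
    constructor
    · rintro ⟨w, hw, rfl⟩
      exact ⟨codedForwardMem_pair_iff.2 ⟨hab', hz, hw⟩, w, D.isTransClass i _ hu w hw, rfl⟩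
    · rintro ⟨hq, w, -, rfl⟩
      exact ⟨w, (codedForwardMem_pair_iff.1 hq).2.2, rfl⟩
  · refine ⟨∅, hS.empty_mem, fun q => iff_of_false (ZFSet.notMem_empty q) ?_⟩
    rintro ⟨⟨a, _, z, _, rfl, rfl, hq⟩, _, -, hqb⟩
    obtain ⟨hb, -⟩ := ZFSet.pair_inj.1 hqb
    exact h ⟨a, z, rfl, Nat.add_le_add_iff_left.1 (natZ_injective hb ▸ hq.1), hq.2.1⟩

theorem exists_predecessors {i : ℕ} {p : ZFSet} (hp : p ∈ D.M i) :
    ∃ P ∈ D.M i, ∀ q, q ∈ P ↔ D.codedForwardMem i q p := by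
  have hslice_def : UniformlyDefinable (fun i => (D.M i).toSet) fun i (v : Fin 3 → ZFSet) =>
      D.codedForwardMem i (v 2) (v 0) ∧ ∃ w ∈ (D.M i).toSet, v 2 = ZFSet.pair (v 1) w :=
    ((uniformlyDefinable_codedForwardMem hsub hψ).comp₂ 2 0).and
      (.ex (UniformlyDefinable.eq_pair D.isTransClass 2 1 3))
  obtain ⟨P, hP, hmem⟩ := UniformlyDefinable.exists_biUnion D.modelsZFCminus
    (Q := fun i p l q => D.codedForwardMem i q p ∧ ∃ w ∈ (D.M i).toSet, q = ZFSet.pair l w)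
    hslice_def hp (D.modelsZFCminus i).omega_mem fun l hl => by
      obtain ⟨b, rfl⟩ := mem_omega_iff.1 hl
      exact exists_predecessors_of_index hsub i b p
  refine ⟨P, hP, fun q => (hmem q).trans ⟨fun ⟨_, _, hq, _⟩ => hq, fun hq => ?_⟩⟩
  obtain ⟨a, b, z, w, rfl, rfl, h⟩ := id hq
  exact ⟨_, natZ_mem_omega b, hq, w, (h.mem_of_subset hsub).2.2, rfl⟩

theorem uniformlyDefinable_acc_forwardMem :
    UniformlyDefinable (fun i => (D.M i).toSet)
      fun i (v : Fin 1 → ZFSet) => Acc D.forwardMem (i, v 0) := by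
  have hacc := uniformlyDefinable_acc D.modelsZFCminus
    (uniformlyDefinable_codedForwardMem hsub hψ) fun _ _ => exists_predecessors hsub hψ
  have hdef : UniformlyDefinable (fun i => (D.M i).toSet) fun i (v : Fin 1 → ZFSet) =>
      ∃ e ∈ (D.M i).toSet, ∃ p ∈ (D.M i).toSet,
        e = ∅ ∧ p = ZFSet.pair e (v 0) ∧ Acc (D.codedForwardMem i) p :=
    .ex <| .ex <| (UniformlyDefinable.eq_empty D.isTransClass 1).and <|
      (UniformlyDefinable.eq_pair D.isTransClass 2 1 0).and (hacc.comp₁ 2)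
  refine hdef.congr fun i v hv => ?_
  have hS := D.modelsZFCminus i
  have hcode : Acc (D.codedForwardMem i) (ZFSet.pair ∅ (v 0)) ↔ Acc D.forwardMem (i, v 0) :=
    acc_codedForwardMem_iff (a := 0)
  rw [← hcode]
  constructor
  · rintro ⟨_, -, _, -, rfl, rfl, h⟩
    exact h
  · exact fun h => ⟨_, hS.empty_mem, _, hS.pair_mem hS.empty_mem (hv 0), rfl, rfl, h⟩

end Coding

end DirSystem

/-- Let `{M i, pi i j | i ≤ j < ω}` be a directed system of models of set
theory indexed by `(ω, ≤)` with `M (i+j) ⊆ M i` for all `i, j`.  Suppose there are formulas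
`φ` and `ψ` such that for all `i, j, k < ω` with `j ≤ k` and all `x, y ∈ M i`:
`x ∈ M (i+j)` iff `M i ⊨ φ(j, x)`, and (`x ∈ M (i+j)` and `pi (i+j) (i+k) x = y`) iff
`M i ⊨ ψ(j, k, x, y)`.  Then the direct limit of the system is well-founded, i.e. the
membership relation on the system of pairs `(i, x)` with `x ∈ M i` (where
`(i,x) E (j,y)` iff `pi i k x ∈ pi j k y` for some `k ≥ i, j`) is well-founded. -/
theorem direct_limit_wellFounded (D : DirSystem ℕ)
    (hsub : ∀ i j : ℕ, (D.M (i + j) : ZFSet) ⊆ D.M i)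
    (φ : setL.BoundedFormula Empty 2)
    (hφ : ∀ i j : ℕ, ∀ x ∈ D.M i,
      (x ∈ D.M (i + j) ↔ ZSat (D.M i).toSet φ ![natZ j, x]))
    (ψ : setL.BoundedFormula Empty 4)
    (hψ : ∀ i j k : ℕ, j ≤ k → ∀ x ∈ D.M i, ∀ y ∈ D.M i,
      ((x ∈ D.M (i + j) ∧ D.pi (i + j) (i + k) x = y) ↔
        ZSat (D.M i).toSet ψ ![natZ j, natZ k, x, y])) :
    WellFounded (fun p q : {p : ℕ × ZFSet // p.2 ∈ D.M p.1} =>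
      ∃ k, p.1.1 ≤ k ∧ q.1.1 ≤ k ∧ D.pi p.1.1 k p.1.2 ∈ D.pi q.1.1 k q.1.2) := by
  have hacc := DirSystem.uniformlyDefinable_acc_forwardMem hsub hψ
  exact ⟨fun p => DirSystem.acc_limitMem_of_acc_forwardMem (DirSystem.acc_forwardMem hacc p.2) p.2⟩
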